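/- Suppose the GMLS approximation with polynomial space P_m (polynomials of degree ≤ m in R^d) reproduces polynomials exactly: Σ_j a_j(λ) p(x_j) = λ(p) for all p ∈ P_m. If u is (m+1)-times continuously differentiable, λ(u) = D^β u(z) for a multi-index |β| = k ≤ m and all x_j lie in a ball of radius h around z, and the coefficients satisfy Σ_j |a_j(λ)| ≤ C h^{−k}, then |λ(u) − Σ_j a_j(λ) u(x_j)| ≤ C' h^{m+1−k}, with C' depending on C, m, d and the (m+1)-st derivatives of u near z. -/

import Mathlib

/-!
Let `T` be the Taylor polynomial of `u` of degree `m` at `z`. Since `D^k T(z) = D^k u(z)` for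
`k ≤ m` and the formula is exact on `T`, the error `D^k u(z) - ∑ a_j u(x_j)` equals
`∑ a_j (T(x_j) - u(x_j))`. Each difference is at most the Taylor remainder `M h^{m+1} / (m+1)!`, and
`∑ |a_j| ≤ C / h^k` accounts for the loss of `k` powers of `h`. The equality `D^k T(z) = D^k u(z)`
rests on the symmetry of `D^k u(z)`: differentiating `y ↦ D^k u(z)(y - z, …, y - z) / k!`
symmetrizes `D^k u(z)`.
-/

open Finset
open scoped Topology

section Symmetry

variable {𝕜 E F : Type*} [RCLike 𝕜] [NormedAddCommGroup E] [NormedSpace 𝕜 E]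
  [NormedAddCommGroup F] [NormedSpace 𝕜 F] {f : E → F} {x : E} {n : ℕ}

theorem iteratedFDeriv_add_two_apply_cons_cons (hf : ContDiffAt 𝕜 (n + 2) f x)
    (a b : E) (w : Fin n → E) :
    iteratedFDeriv 𝕜 (n + 2) f x (Matrix.vecCons a (Matrix.vecCons b w)) =
      fderiv 𝕜 (fderiv 𝕜 (iteratedFDeriv 𝕜 n f)) x a b w := by
  have hD : ContDiffAt 𝕜 2 (iteratedFDeriv 𝕜 n f) x :=
    hf.iteratedFDeriv_right (by rw [add_comm])
  have hDD : DifferentiableAt 𝕜 (fderiv 𝕜 (iteratedFDeriv 𝕜 n f)) x :=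
    (hD.fderiv_right (m := 1) (by norm_num)).differentiableAt one_ne_zero
  have hdiff : DifferentiableAt 𝕜 (iteratedFDeriv 𝕜 (n + 1) f) x :=
    hf.differentiableAt_iteratedFDeriv (by exact_mod_cast Nat.lt_succ_self (n + 1))
  calc iteratedFDeriv 𝕜 (n + 2) f x (Matrix.vecCons a (Matrix.vecCons b w))
      = fderiv 𝕜 (fun y ↦ fderiv 𝕜 (iteratedFDeriv 𝕜 n f) y b w) x a :=
        hdiff.iteratedFDeriv_succ_apply_left'
    _ = fderiv 𝕜 (fun y ↦ fderiv 𝕜 (iteratedFDeriv 𝕜 n f) y b) x a w :=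
        fderiv_continuousMultilinear_apply_const_apply
          (hDD.clm_apply (differentiableAt_const b)) w a
    _ = fderiv 𝕜 (fderiv 𝕜 (iteratedFDeriv 𝕜 n f)) x a b w := by
        rw [fderiv_clm_apply hDD (differentiableAt_const b)]
        simp

theorem iteratedFDeriv_comp_swap_castSucc_succ (hf : ContDiffAt 𝕜 (n + 1 : ℕ) f x) (i : Fin n)
    (v : Fin (n + 1) → E) :
    iteratedFDeriv 𝕜 (n + 1) f x (v ∘ Equiv.swap i.castSucc i.succ) =
      iteratedFDeriv 𝕜 (n + 1) f x v := by
  induction n generalizing x with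
  | zero => exact i.elim0
  | succ n ih =>
    obtain ⟨a, v, rfl⟩ : ∃ (a : E) (w : Fin (n + 1) → E), v = Matrix.vecCons a w :=
      ⟨_, _, (Fin.cons_self_tail v).symm⟩
    cases i using Fin.cases with
    | zero =>
      obtain ⟨b, w, rfl⟩ : ∃ (b : E) (w : Fin n → E), v = Matrix.vecCons b w :=
        ⟨_, _, (Fin.cons_self_tail v).symm⟩
      have hsymm : IsSymmSndFDerivAt 𝕜 (iteratedFDeriv 𝕜 n f) x :=
        (hf.iteratedFDeriv_right (m := 2) (by push_cast; rw [add_comm, add_assoc]; norm_num))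
          |>.isSymmSndFDerivAt (by simp)
      have hf' : ContDiffAt 𝕜 (n + 2) f x := by exact_mod_cast hf
      rw [Fin.castSucc_zero, Fin.succ_zero_eq_one, Matrix.cons_cons_comp_swap_zero_one,
        iteratedFDeriv_add_two_apply_cons_cons hf', iteratedFDeriv_add_two_apply_cons_cons hf',
        hsymm.eq]
    | succ j =>
      have hlt : ((n + 1 : ℕ) : WithTop ℕ∞) < (n + 1 + 1 : ℕ) := by
        exact_mod_cast Nat.lt_succ_self (n + 1)
      have hdiff := hf.differentiableAt_iteratedFDeriv hlt
      have htail : (fun y ↦ iteratedFDeriv 𝕜 (n + 1) f y (v ∘ Equiv.swap j.castSucc j.succ))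
          =ᶠ[𝓝 x] fun y ↦ iteratedFDeriv 𝕜 (n + 1) f y v :=
        ((hf.of_le hlt.le).eventually (by simp)).mono fun y hy ↦ ih hy j v
      rw [← Fin.succ_castSucc, ← Matrix.cons_swap, hdiff.iteratedFDeriv_succ_apply_left',
        hdiff.iteratedFDeriv_succ_apply_left']
      exact DFunLike.congr_fun htail.fderiv_eq a

/-- `ContDiffAt.iteratedFDeriv_comp_perm` is the analytic case. Here `C^n` is enough, since adjacent
transpositions generate the symmetric group and only need symmetry of second derivatives. -/
theorem iteratedFDeriv_comp_perm_of_contDiffAt (hf : ContDiffAt 𝕜 n f x) (v : Fin n → E)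
    (σ : Equiv.Perm (Fin n)) :
    iteratedFDeriv 𝕜 n f x (v ∘ σ) = iteratedFDeriv 𝕜 n f x v := by
  cases n with
  | zero => rw [Subsingleton.elim (v ∘ σ) v]
  | succ n =>
    have hσ : σ ∈ Submonoid.closure (Set.range fun i : Fin n ↦ Equiv.swap i.castSucc i.succ) :=
      Equiv.Perm.mclosure_swap_castSucc_succ n ▸ Submonoid.mem_top σ
    induction hσ using Submonoid.closure_induction generalizing v with
    | mem _ h =>
      obtain ⟨i, rfl⟩ := h
      exact iteratedFDeriv_comp_swap_castSucc_succ hf i v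
    | one => rfl
    | mul σ τ _ _ hσ hτ => exact (hτ (v ∘ σ)).trans (hσ v)

end Symmetry

section TaylorPolynomial

variable (𝕜 : Type*) {E F : Type*} [RCLike 𝕜] [NormedAddCommGroup E] [NormedSpace 𝕜 E]
  [NormedAddCommGroup F] [NormedSpace 𝕜 F]

/-- The power series at `z` whose `n`-th coefficient is `D^n f(z) / n!` for `n ≤ m` and `0` beyond:
the coefficients of `taylorPolynomial`. -/
noncomputable def taylorCoeff (f : E → F) (m : ℕ) (z : E) : FormalMultilinearSeries 𝕜 E F :=
  fun n ↦ if n ≤ m then (n.factorial : 𝕜)⁻¹ • iteratedFDeriv 𝕜 n f z else 0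

/-- The Taylor polynomial of `f` of degree `m` at `z`, as a function on the whole space. -/
noncomputable def taylorPolynomial (f : E → F) (m : ℕ) (z y : E) : F :=
  ∑ n ∈ range (m + 1), (n.factorial : 𝕜)⁻¹ • iteratedFDeriv 𝕜 n f z fun _ ↦ y - z

theorem hasFiniteFPowerSeriesOnBall_taylorPolynomial (f : E → F) (m : ℕ) (z : E) :
    HasFiniteFPowerSeriesOnBall (taylorPolynomial 𝕜 f m z) (taylorCoeff 𝕜 f m z) z (m + 1) ⊤ := by
  refine .mk' (fun n hn ↦ if_neg (by omega)) ENNReal.zero_lt_top fun y _ ↦ ?_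
  refine sum_congr rfl fun n hn ↦ ?_
  rw [taylorCoeff, if_pos (Nat.lt_succ_iff.mp (mem_range.mp hn)), add_sub_cancel_left,
    smul_apply]

variable {𝕜}

theorem iteratedFDeriv_taylorPolynomial {f : E → F} {k m : ℕ} {z : E} (hkm : k ≤ m)
    (hf : ContDiffAt 𝕜 k f z) :
    iteratedFDeriv 𝕜 k (taylorPolynomial 𝕜 f m z) z = iteratedFDeriv 𝕜 k f z := by
  ext v
  have hT := hasFiniteFPowerSeriesOnBall_taylorPolynomial 𝕜 f m z
  have hcoeff (σ : Equiv.Perm (Fin k)) :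
      taylorCoeff 𝕜 f m z k (fun i ↦ v (σ i)) =
        (k.factorial : 𝕜)⁻¹ • iteratedFDeriv 𝕜 k f z v := by
    rw [taylorCoeff, if_pos hkm, smul_apply]
    exact congrArg _ (iteratedFDeriv_comp_perm_of_contDiffAt hf v σ)
  have hanalytic : AnalyticOn 𝕜 (taylorPolynomial 𝕜 f m z) Set.univ := by
    simpa using hT.cpolynomialOn.analyticOn
  calc iteratedFDeriv 𝕜 k (taylorPolynomial 𝕜 f m z) z v
      = ∑ σ : Equiv.Perm (Fin k), taylorCoeff 𝕜 f m z k (fun i ↦ v (σ i)) :=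
        hT.toHasFPowerSeriesOnBall.iteratedFDeriv_eq_sum hanalytic v
    _ = k.factorial • (k.factorial : 𝕜)⁻¹ • iteratedFDeriv 𝕜 k f z v := by
        simp only [hcoeff, sum_const, card_univ, Fintype.card_perm, Fintype.card_fin]
    _ = iteratedFDeriv 𝕜 k f z v := by
        rw [← Nat.cast_smul_eq_nsmul 𝕜,
          smul_inv_smul₀ (Nat.cast_ne_zero.mpr k.factorial_ne_zero)]

end TaylorPolynomial

section Remainder

variable {E F : Type*} [NormedAddCommGroup E] [NormedSpace ℝ E] [NormedAddCommGroup F]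
  [NormedSpace ℝ F]

theorem norm_integral_one_sub_pow_smul_le {g : ℝ → F} {K : ℝ} (m : ℕ)
    (hg : ∀ t ∈ Set.Ioc (0 : ℝ) 1, ‖g t‖ ≤ K) :
    ‖∫ t in (0 : ℝ)..1, (1 - t) ^ m • g t‖ ≤ K / (m + 1) := by
  have hbound (t : ℝ) (ht : t ∈ Set.Ioc (0 : ℝ) 1) : ‖(1 - t) ^ m • g t‖ ≤ (1 - t) ^ m * K := by
    have h1t : 0 ≤ (1 - t) ^ m := pow_nonneg (sub_nonneg.mpr ht.2) m
    rw [norm_smul, Real.norm_of_nonneg h1t]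
    exact mul_le_mul_of_nonneg_left (hg t ht) h1t
  calc ‖∫ t in (0 : ℝ)..1, (1 - t) ^ m • g t‖
      ≤ ∫ t in (0 : ℝ)..1, (1 - t) ^ m * K :=
        intervalIntegral.norm_integral_le_of_norm_le zero_le_one (.of_forall hbound)
          (Continuous.intervalIntegrable (by fun_prop) 0 1)
    _ = K / (m + 1) := by
        rw [intervalIntegral.integral_mul_const,
          intervalIntegral.integral_comp_sub_left (fun t ↦ t ^ m), integral_pow]
        simp [div_eq_inv_mul]

theorem norm_sub_taylorPolynomial_le [CompleteSpace F] {f : E → F} {m : ℕ} {z x : E} {M : ℝ}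
    (hf : ∀ y ∈ segment ℝ z x, ContDiffAt ℝ (m + 1) f y)
    (hM : ∀ y ∈ segment ℝ z x, ‖iteratedFDeriv ℝ (m + 1) f y‖ ≤ M) :
    ‖f x - taylorPolynomial ℝ f m z x‖ ≤ M * ‖x - z‖ ^ (m + 1) / (m + 1).factorial := by
  have hseg {t : ℝ} (ht : t ∈ Set.Icc (0 : ℝ) 1) : z + t • (x - z) ∈ segment ℝ z x :=
    segment_eq_image' ℝ z x ▸ Set.mem_image_of_mem _ ht
  have htaylor := map_add_eq_sum_add_integral_iteratedFDeriv (f := f) (x := z) (y := x - z)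
    fun t ht ↦ hf _ (hseg ht)
  rw [add_sub_cancel] at htaylor
  have hderiv (t : ℝ) (ht : t ∈ Set.Ioc (0 : ℝ) 1) :
      ‖iteratedFDeriv ℝ (m + 1) f (z + t • (x - z)) fun _ ↦ x - z‖ ≤ M * ‖x - z‖ ^ (m + 1) :=
    ((iteratedFDeriv ℝ (m + 1) f _).le_opNorm_mul_pow_of_le (pi_norm_const_le _)).trans <| by
      gcongr
      exact hM _ (hseg (Set.Ioc_subset_Icc_self ht))
  rw [htaylor, taylorPolynomial, add_sub_cancel_left, norm_smul, norm_inv, Real.norm_natCast]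
  calc (m.factorial : ℝ)⁻¹ * _
      ≤ (m.factorial : ℝ)⁻¹ * (M * ‖x - z‖ ^ (m + 1) / (m + 1)) := by
        gcongr
        exact norm_integral_one_sub_pow_smul_le m hderiv
    _ = M * ‖x - z‖ ^ (m + 1) / (m + 1).factorial := by
        rw [Nat.factorial_succ]
        push_cast
        field_simp

/-- The formula `∑ a_j u(x_j)` is required to be exact on the functions with a finite power series
of degree `≤ m` at `z`, that is, on the continuous polynomial maps of degree `≤ m`. -/
theorem stmt_18_general [CompleteSpace F] {J : Type*} [Fintype J] {m k : ℕ} (hk : k ≤ m) {h : ℝ}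
    (hh : 0 < h) {z : E} {x : J → E} (hx : ∀ j, x j ∈ Metric.closedBall z h) {a : J → ℝ} {C : ℝ}
    (ha : ∑ j, |a j| ≤ C / h ^ k) {u : E → F}
    (hu : ∀ y ∈ Metric.closedBall z h, ContDiffAt ℝ (m + 1) u y) {v : Fin k → E}
    (hexact : ∀ (Q : E → F) (P : FormalMultilinearSeries ℝ E F),
      HasFiniteFPowerSeriesOnBall Q P z (m + 1) ⊤ → iteratedFDeriv ℝ k Q z v = ∑ j, a j • Q (x j))
    {M : ℝ} (hM : ∀ y ∈ Metric.closedBall z h, ‖iteratedFDeriv ℝ (m + 1) u y‖ ≤ M) :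
    ‖iteratedFDeriv ℝ k u z v - ∑ j, a j • u (x j)‖ ≤
      ((m + 1).factorial : ℝ)⁻¹ * C * M * h ^ (m + 1 - k) := by
  set T := taylorPolynomial ℝ u m z
  have hz : z ∈ Metric.closedBall z h := Metric.mem_closedBall_self hh.le
  have hM_nonneg : 0 ≤ M := (norm_nonneg _).trans (hM z hz)
  have hderiv : iteratedFDeriv ℝ k T z = iteratedFDeriv ℝ k u z :=
    iteratedFDeriv_taylorPolynomial hk <| (hu z hz).of_le <| by
      exact_mod_cast hk.trans m.le_succ
  have hremainder (j : J) : ‖u (x j) - T (x j)‖ ≤ M * h ^ (m + 1) / (m + 1).factorial := by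
    have hseg := (convex_closedBall z h).segment_subset hz (hx j)
    have hdist : ‖x j - z‖ ≤ h := mem_closedBall_iff_norm.mp (hx j)
    exact (norm_sub_taylorPolynomial_le (fun y hy ↦ hu y (hseg hy))
      fun y hy ↦ hM y (hseg hy)).trans (by gcongr)
  calc ‖iteratedFDeriv ℝ k u z v - ∑ j, a j • u (x j)‖
      = ‖∑ j, a j • (T (x j) - u (x j))‖ := by
        rw [← hderiv, hexact T _ (hasFiniteFPowerSeriesOnBall_taylorPolynomial ℝ u m z)]
        simp only [smul_sub, sum_sub_distrib]
    _ ≤ ∑ j, |a j| * (M * h ^ (m + 1) / (m + 1).factorial) :=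
        norm_sum_le_of_le _ fun j _ ↦ by
          rw [norm_smul, norm_sub_rev, Real.norm_eq_abs]
          gcongr
          exact hremainder j
    _ ≤ C / h ^ k * (M * h ^ (m + 1) / (m + 1).factorial) := by
        rw [← sum_mul]
        gcongr
    _ = ((m + 1).factorial : ℝ)⁻¹ * C * M * h ^ (m + 1 - k) := by
        rw [← pow_sub_mul_pow h (hk.trans m.le_succ)]
        field_simp

end Remainder

section MvPolynomial

open MvPolynomial

theorem exists_mvPolynomial_eval_eq_multilinearMap {R V σ κ : Type*} [CommRing R]
    [AddCommGroup V] [Module R V] [Finite σ] [Fintype κ] (b : Module.Basis σ R V)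
    (f : MultilinearMap R (fun _ : κ ↦ V) R) (z : V) :
    ∃ p : MvPolynomial σ R, p.totalDegree ≤ Fintype.card κ ∧
      ∀ y, eval (b.repr y) p = f fun _ ↦ y - z := by
  classical
  have := Fintype.ofFinite σ
  refine ⟨∑ r : κ → σ, C (f fun i ↦ b (r i)) * ∏ i, (X (r i) - C (b.repr z (r i))),
    totalDegree_finsetSum_le fun r _ ↦ ?_, fun y ↦ ?_⟩
  · have hfactor (s : σ) : (X s - C (b.repr z s) : MvPolynomial σ R).totalDegree ≤ 1 :=
      (totalDegree_sub_C_le _ _).trans (totalDegree_monomial_le _ _ |>.trans (by simp))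
    calc _ ≤ (C (f fun i ↦ b (r i)) : MvPolynomial σ R).totalDegree +
          (∏ i, (X (r i) - C (b.repr z (r i)))).totalDegree := totalDegree_mul _ _
      _ ≤ 0 + ∑ _i : κ, 1 := add_le_add (totalDegree_C _).le
          ((totalDegree_finsetProd _ _).trans (sum_le_sum fun i _ ↦ hfactor (r i)))
      _ = Fintype.card κ := by simp
  · have hyz : y - z = ∑ s, (b.repr y s - b.repr z s) • b s := by
      simpa using (b.sum_repr (y - z)).symm
    rw [hyz, f.map_sum]
    simp only [map_sum, map_mul, map_prod, map_sub, eval_C, eval_X, f.map_smul_univ, smul_eq_mul,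
      mul_comm]

theorem exists_mvPolynomial_eval_eq_of_hasFiniteFPowerSeriesOnBall {𝕜 E σ : Type*}
    [NontriviallyNormedField 𝕜] [NormedAddCommGroup E] [NormedSpace 𝕜 E] [Finite σ]
    (b : Module.Basis σ 𝕜 E) {Q : E → 𝕜} {P : FormalMultilinearSeries 𝕜 E 𝕜} {z : E} {m : ℕ}
    (hQ : HasFiniteFPowerSeriesOnBall Q P z (m + 1) ⊤) :
    ∃ p : MvPolynomial σ 𝕜, p.totalDegree ≤ m ∧ ∀ y, eval (b.repr y) p = Q y := by
  choose p hp_degree hp_eval using fun n ↦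
    exists_mvPolynomial_eval_eq_multilinearMap b (P n).toMultilinearMap z
  refine ⟨∑ n ∈ range (m + 1), p n, totalDegree_finsetSum_le fun n hn ↦ ?_, fun y ↦ ?_⟩
  · exact (hp_degree n).trans (by simpa using Nat.lt_succ_iff.mp (mem_range.mp hn))
  · rw [hQ.eq_partialSum' y (by simp) (m + 1) le_rfl, map_sum]
    exact sum_congr rfl fun n _ ↦ hp_eval n y

end MvPolynomial

/-- GMLS error bound. If the GMLS approximation reproduces all
polynomials of degree `≤ m` for the functional `λ(u) = D^β u(z)` (`|β| = k ≤ m`,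
encoded by the direction list `ι : Fin k → Fin d`), the nodes lie in the ball
`B(z,h)` and `∑ |a_j| ≤ C/h^k`, then for `u ∈ C^{m+1}` with `(m+1)`-st
derivatives bounded by `M` near `z`,
`|λ(u) − ∑ a_j u(x_j)| ≤ c·C·M·h^{m+1−k}` with `c` depending only on `m, d, k`. -/
theorem stmt_18 (d m k : ℕ) (hk : k ≤ m) :
    ∃ c : ℝ, 0 < c ∧
      ∀ (h : ℝ), 0 < h →
      ∀ (z : EuclideanSpace ℝ (Fin d)) (N : ℕ)
        (x : Fin N → EuclideanSpace ℝ (Fin d)),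
        (∀ j, x j ∈ Metric.closedBall z h) →
      ∀ (aco : Fin N → ℝ) (C : ℝ), (∑ j, |aco j|) ≤ C / h ^ k →
      ∀ (u : EuclideanSpace ℝ (Fin d) → ℝ), ContDiff ℝ (m + 1) u →
      ∀ (ι : Fin k → Fin d),
        (∀ p : MvPolynomial (Fin d) ℝ, p.totalDegree ≤ m →
          (iteratedFDeriv ℝ k
              (fun y : EuclideanSpace ℝ (Fin d) =>
                MvPolynomial.eval (fun i => y i) p) z)
              (fun i => EuclideanSpace.single (ι i) (1 : ℝ))
            = ∑ j, aco j * MvPolynomial.eval (fun i => x j i) p) →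
      ∀ M : ℝ, (∀ y ∈ Metric.closedBall z h, ‖iteratedFDeriv ℝ (m + 1) u y‖ ≤ M) →
        |(iteratedFDeriv ℝ k u z) (fun i => EuclideanSpace.single (ι i) (1 : ℝ))
            - ∑ j, aco j * u (x j)|
          ≤ c * C * M * h ^ (m + 1 - k) := by
  refine ⟨((m + 1).factorial : ℝ)⁻¹, by positivity, fun h hh z N x hx a C ha u hu ι hrep M hM ↦
    stmt_18_general hk hh hx ha (fun _ _ ↦ hu.contDiffAt) (fun Q P hQ ↦ ?_) hM⟩
  obtain ⟨p, hp, hpQ⟩ := exists_mvPolynomial_eval_eq_of_hasFiniteFPowerSeriesOnBall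
    (EuclideanSpace.basisFun (Fin d) ℝ).toBasis hQ
  exact funext hpQ ▸ hrep p hp
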